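/- Structure theorem for the covariance of a coupled random walk. For i = 1, 2, let ⟨·,·⟩_i be an Ad_i-invariant inner product on ℝ^{m_i}, let θ̲_i := (1/#F_i)·∑_{f∈F_i} Ad_i(f), and equip ℝ^{m₁}×ℝ^{m₂} with the orthogonal-sum inner product. Let ν be a non-degenerate probability measure on Γ₁×Γ₂ with finite second moment, with marginals μ^{(1)}, μ^{(2)} (which are non-degenerate). For 𝐯, 𝐯' ∈ ℝ^{m₁}×ℝ^{m₂}, define B_ν(𝐯,𝐯') := ∑_{(x,s)} c(x,s)·u(x,s)·u'(x,s) − χ(u)·χ(u'), where u, u' are the harmonic parts of the 1-forms 𝐯̂(x,s) := ⟨𝐯, α(x,s)⟩ and 𝐯̂' with respect to (Γ₁×Γ₂, ν, Δ₁×Δ₂); define B_{μ^{(i)}} on ℝ^{m_i} analogously using (Γ_i, μ^{(i)}, Δ_i) and ⟨·,·⟩_i. Let ζ_ν := ∑_{(x,s)} c(x,s)·α(x,s) ∈ ℝ^{m₁}×ℝ^{m₂}. Then: (i) ζ_ν lies in range(θ̲₁) × range(θ̲₂); (ii) B_ν((v₁,0),(v₁',0)) = B_{μ^{(1)}}(v₁,v₁')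 for all v₁, v₁' ∈ ℝ^{m₁}, and B_ν((0,v₂),(0,v₂')) = B_{μ^{(2)}}(v₂,v₂') for all v₂, v₂' ∈ ℝ^{m₂}; (iii) B_ν((v₁,0),(0,v₂)) = 0 whenever v₁ is orthogonal to range(θ̲₁) (with respect to ⟨·,·⟩₁) or v₂ is orthogonal to range(θ̲₂) (with respect to ⟨·,·⟩₂). -/

import Mathlib

open scoped BigOperators Classical
open Filter Matrix MeasureTheory

namespace NSVA

noncomputable section

/-- Convolution of two real-valued functions on a group. -/
def conv {G : Type*} [Group G] (μ ν : G → ℝ) : G → ℝ :=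
  fun g => ∑' h : G, μ h * ν (h⁻¹ * g)

/-- Convolution powers: `convPow μ 0 = δ_1`, `convPow μ (n+1) = (convPow μ n) * μ`. -/
def convPow {G : Type*} [Group G] (μ : G → ℝ) : ℕ → G → ℝ
  | 0 => fun g => if g = 1 then 1 else 0
  | n + 1 => conv (convPow μ n) μ

/-- A probability measure on a countable set, viewed as a function. -/
def IsProb {G : Type*} (μ : G → ℝ) : Prop := (∀ g, 0 ≤ μ g) ∧ HasSum μ 1

/-- The support of `μ` generates the group as a semigroup. -/
def Nondeg {G : Type*} [Group G] (μ : G → ℝ) : Prop :=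
  ∀ g : G, g ∈ Subsemigroup.closure {x : G | 0 < μ x}

/-- `μ` is aperiodic: `μ_n(1) > 0` for all large enough `n`. -/
def Aperiodic {G : Type*} [Group G] (μ : G → ℝ) : Prop :=
  ∃ N : ℕ, ∀ n : ℕ, N ≤ n → 0 < convPow μ n 1

/-- Total variation distance between two (probability) functions. -/
def tv {Z : Type*} (p q : Z → ℝ) : ℝ := (1 / 2) * ∑' z : Z, |p z - q z|

/-- Word length with respect to a finite set `S₀`. -/
def wordLength {G : Type*} [Group G] (S₀ : Finset G) (g : G) : ℕ :=
  sInf {n : ℕ | ∃ l : List G, (∀ s ∈ l, s ∈ S₀) ∧ l.length = n ∧ l.prod = g}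

/-- Finite second moment with respect to a word metric given by a finite symmetric
generating set. -/
def FinSecondMoment {G : Type*} [Group G] (μ : G → ℝ) : Prop :=
  ∃ S₀ : Finset G, (∀ s ∈ S₀, s⁻¹ ∈ S₀) ∧ Subgroup.closure (S₀ : Set G) = ⊤ ∧
    Summable (fun g : G => (wordLength S₀ g : ℝ) ^ 2 * μ g)

/-- A group is virtually abelian if it has an abelian subgroup of finite index. -/
def VirtAbelian (G : Type*) [Group G] : Prop :=
  ∃ A : Subgroup G, A.index ≠ 0 ∧ ∀ a b : A, a * b = b * a

/-- The noised measure `π^ρ` on `G × G`. -/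
def noised {G : Type*} (μ : G → ℝ) (ρ : ℝ) : G × G → ℝ :=
  fun p => ρ * μ p.1 * μ p.2 + (1 - ρ) * μ p.1 * (if p.1 = p.2 then 1 else 0)

/-- First marginal of a measure on a product. -/
def marg1 {G₁ G₂ : Type*} (ν : G₁ × G₂ → ℝ) : G₁ → ℝ := fun γ₁ => ∑' γ₂ : G₂, ν (γ₁, γ₂)

/-- Second marginal of a measure on a product. -/
def marg2 {G₁ G₂ : Type*} (ν : G₁ × G₂ → ℝ) : G₂ → ℝ := fun γ₂ => ∑' γ₁ : G₁, ν (γ₁, γ₂)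

/-- A system of representatives of the right cosets `Λ\Γ` containing the identity,
together with the representative map `rep`, constant on right cosets. -/
structure RepSystem {Γ : Type*} [Group Γ] (Λ : Subgroup Γ) where
  Δ : Finset Γ
  one_mem : (1 : Γ) ∈ Δ
  rep : Γ → Γ
  rep_mem : ∀ γ : Γ, rep γ ∈ Δ
  rep_spec : ∀ γ : Γ, γ * (rep γ)⁻¹ ∈ Λ
  rep_idem : ∀ x ∈ Δ, rep x = x
  rep_coset : ∀ γ : Γ, ∀ v ∈ Λ, rep (v * γ) = rep γ

variable {Γ : Type*} [Group Γ] {Λ : Subgroup Γ} {m : ℕ}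

/-- The cocycle `α(x,s) = ψ(x·s·(x^s)⁻¹) ∈ ℤ^m`. -/
def cocycle (ψ : Λ ≃* Multiplicative (Fin m → ℤ)) (R : RepSystem Λ) (x s : Γ) : Fin m → ℤ :=
  Multiplicative.toAdd (ψ ⟨x * s * (R.rep (x * s))⁻¹, R.rep_spec (x * s)⟩)

/-- The transfer homomorphism `θ(γ) = ∑_{x∈Δ} α(x,γ)`. -/
def transfer (ψ : Λ ≃* Multiplicative (Fin m → ℤ)) (R : RepSystem Λ) (γ : Γ) : Fin m → ℤ :=
  ∑ x ∈ R.Δ, cocycle ψ R x γ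

/-- `Φ(γ) = ψ(v)` where `γ = v·x`, `v ∈ Λ`, `x ∈ Δ`. -/
def Phi (ψ : Λ ≃* Multiplicative (Fin m → ℤ)) (R : RepSystem Λ) (γ : Γ) : Fin m → ℤ :=
  Multiplicative.toAdd (ψ ⟨γ * (R.rep γ)⁻¹, R.rep_spec γ⟩)

/-- A 1-form on the quotient diagram. -/
def IsOneForm (R : RepSystem Λ) (ω : Γ → Γ → ℝ) : Prop :=
  ∀ x ∈ R.Δ, ∀ s : Γ, ω (R.rep (x * s)) s⁻¹ = -ω x s

/-- `χ(ω) = ∑_{x∈Δ} ∑_s c(x,s)·ω(x,s)` where `c(x,s) = μ(s)/#F`. -/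
def chi (R : RepSystem Λ) (μ : Γ → ℝ) (ω : Γ → Γ → ℝ) : ℝ :=
  ∑ x ∈ R.Δ, ∑' s : Γ, μ s / (Λ.index : ℝ) * ω x s

/-- Square-integrability of a 1-form. -/
def SqInt (R : RepSystem Λ) (μ : Γ → ℝ) (ω : Γ → Γ → ℝ) : Prop :=
  ∀ x ∈ R.Δ, Summable (fun s : Γ => μ s / (Λ.index : ℝ) * ω x s ^ 2)

/-- Harmonicity of a (square-integrable) 1-form. -/
def Harmonic (R : RepSystem Λ) (μ : Γ → ℝ) (ω : Γ → Γ → ℝ) : Prop :=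
  SqInt R μ ω ∧ ∀ x ∈ R.Δ, (∑' s : Γ, μ s * ω x s) = chi R μ ω

/-- The differential `df(x,s) = f(x^s) − f(x)`. -/
def dd (R : RepSystem Λ) (f : Γ → ℝ) : Γ → Γ → ℝ := fun x s => f (R.rep (x * s)) - f x

/-- `(u, f)` is a harmonic decomposition of the 1-form `ω`: `ω = u + df` with `u`
a harmonic 1-form. -/
def IsHarmDecomp (R : RepSystem Λ) (μ : Γ → ℝ) (ω u : Γ → Γ → ℝ) (f : Γ → ℝ) : Prop :=
  IsOneForm R u ∧ Harmonic R μ u ∧ ∀ x ∈ R.Δ, ∀ s : Γ, ω x s = u x s + dd R f x s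

/-- The 1-form `v̂(x,s) = ⟨v, α(x,s)⟩` (standard inner product). -/
def vhat (ψ : Λ ≃* Multiplicative (Fin m → ℤ)) (R : RepSystem Λ) (v : Fin m → ℝ) :
    Γ → Γ → ℝ :=
  fun x s => ∑ i, v i * (cocycle ψ R x s i : ℝ)

/-- The 1-form `v̂(x,s) = B(v, α(x,s))` for a bilinear form `B`. -/
def vhatB (ψ : Λ ≃* Multiplicative (Fin m → ℤ)) (R : RepSystem Λ)
    (B : (Fin m → ℝ) →ₗ[ℝ] (Fin m → ℝ) →ₗ[ℝ] ℝ) (v : Fin m → ℝ) : Γ → Γ → ℝ :=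
  fun x s => B v (fun i => (cocycle ψ R x s i : ℝ))

/-- The drift `ζ = (1/#F)·∑_{x∈Δ}∑_s μ(s)·α(x,s) ∈ ℝ^m`. -/
def drift (ψ : Λ ≃* Multiplicative (Fin m → ℤ)) (R : RepSystem Λ) (μ : Γ → ℝ) : Fin m → ℝ :=
  fun i => (Λ.index : ℝ)⁻¹ * ∑ x ∈ R.Δ, ∑' s : Γ, μ s * (cocycle ψ R x s i : ℝ)

/-- The covariance pairing `∑_{x,s} c(x,s)·u(x,s)·u'(x,s) − χ(u)·χ(u')`. -/
def cov (R : RepSystem Λ) (μ : Γ → ℝ) (u u' : Γ → Γ → ℝ) : ℝ :=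
  (∑ x ∈ R.Δ, ∑' s : Γ, μ s / (Λ.index : ℝ) * (u x s * u' x s)) - chi R μ u * chi R μ u'

/-- The transfer operator `ℒ_v` acting on functions `Δ → ℂ`. -/
def transferOp (ψ : Λ ≃* Multiplicative (Fin m → ℤ)) (R : RepSystem Λ) (μ : Γ → ℝ)
    (v : Fin m → ℝ) (f : Γ → ℂ) : Γ → ℂ :=
  fun x => ∑' s : Γ, (μ s : ℂ) *
    Complex.exp (2 * Real.pi * Complex.I * ((∑ i, v i * (cocycle ψ R x s i : ℝ)) : ℝ)) *
    f (R.rep (x * s))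

/-- The Gaussian density `ξ_A(w)` associated with a (positive-definite) matrix `A`. -/
def gauss {d : ℕ} (A : Matrix (Fin d) (Fin d) ℝ) (w : Fin d → ℝ) : ℝ :=
  (2 * Real.pi) ^ (-(d : ℝ) / 2) * A.det ^ (-(1 : ℝ) / 2) *
    Real.exp (-(w ⬝ᵥ A⁻¹.mulVec w) / 2)

/-- The product representative system for `Λ₁ × Λ₂ ≤ Γ₁ × Γ₂`. -/
def prodRep {Γ₁ : Type*} [Group Γ₁] {Γ₂ : Type*} [Group Γ₂]
    {Λ₁ : Subgroup Γ₁} {Λ₂ : Subgroup Γ₂}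
    (R₁ : RepSystem Λ₁) (R₂ : RepSystem Λ₂) : RepSystem (Λ₁.prod Λ₂) where
  Δ := R₁.Δ ×ˢ R₂.Δ
  one_mem := Finset.mem_product.mpr ⟨R₁.one_mem, R₂.one_mem⟩
  rep := fun p => (R₁.rep p.1, R₂.rep p.2)
  rep_mem := fun p => Finset.mem_product.mpr ⟨R₁.rep_mem p.1, R₂.rep_mem p.2⟩
  rep_spec := fun p => Subgroup.mem_prod.mpr ⟨R₁.rep_spec p.1, R₂.rep_spec p.2⟩
  rep_idem := fun x hx => by
    rcases Finset.mem_product.mp hx with ⟨h1, h2⟩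
    exact Prod.ext_iff.mpr ⟨R₁.rep_idem x.1 h1, R₂.rep_idem x.2 h2⟩
  rep_coset := fun p v hv => by
    rcases Subgroup.mem_prod.mp hv with ⟨h1, h2⟩
    exact Prod.ext_iff.mpr ⟨R₁.rep_coset p.1 v.1 h1, R₂.rep_coset p.2 v.2 h2⟩

/-- The 1-form `𝐯̂(x,s) = ⟨𝐯, α(x,s)⟩` on a product, standard inner product. -/
def vhat2 {Γ₁ : Type*} [Group Γ₁] {Γ₂ : Type*} [Group Γ₂]
    {Λ₁ : Subgroup Γ₁} {Λ₂ : Subgroup Γ₂} {m₁ m₂ : ℕ}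
    (ψ₁ : Λ₁ ≃* Multiplicative (Fin m₁ → ℤ)) (R₁ : RepSystem Λ₁)
    (ψ₂ : Λ₂ ≃* Multiplicative (Fin m₂ → ℤ)) (R₂ : RepSystem Λ₂)
    (v : (Fin m₁ → ℝ) × (Fin m₂ → ℝ)) : (Γ₁ × Γ₂) → (Γ₁ × Γ₂) → ℝ :=
  fun x s => (∑ i, v.1 i * (cocycle ψ₁ R₁ x.1 s.1 i : ℝ)) +
    ∑ i, v.2 i * (cocycle ψ₂ R₂ x.2 s.2 i : ℝ)

/-- The 1-form `𝐯̂(x,s) = ⟨𝐯, α(x,s)⟩` on a product, orthogonal-sum of the two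
bilinear forms `B₁`, `B₂`. -/
def vhatB2 {Γ₁ : Type*} [Group Γ₁] {Γ₂ : Type*} [Group Γ₂]
    {Λ₁ : Subgroup Γ₁} {Λ₂ : Subgroup Γ₂} {m₁ m₂ : ℕ}
    (ψ₁ : Λ₁ ≃* Multiplicative (Fin m₁ → ℤ)) (R₁ : RepSystem Λ₁)
    (B₁ : (Fin m₁ → ℝ) →ₗ[ℝ] (Fin m₁ → ℝ) →ₗ[ℝ] ℝ)
    (ψ₂ : Λ₂ ≃* Multiplicative (Fin m₂ → ℤ)) (R₂ : RepSystem Λ₂)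
    (B₂ : (Fin m₂ → ℝ) →ₗ[ℝ] (Fin m₂ → ℝ) →ₗ[ℝ] ℝ)
    (v : (Fin m₁ → ℝ) × (Fin m₂ → ℝ)) : (Γ₁ × Γ₂) → (Γ₁ × Γ₂) → ℝ :=
  fun x s => B₁ v.1 (fun i => (cocycle ψ₁ R₁ x.1 s.1 i : ℝ)) +
    B₂ v.2 (fun i => (cocycle ψ₂ R₂ x.2 s.2 i : ℝ))

end

/-!
Projecting `Γ₁ × Γ₂` to a factor is a covering of the quotient diagrams which carries `ν` to its
marginal. A 1-form pulled back along a covering `π` has a pulled-back harmonic part: averaging a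
decomposition `ω ∘ π = u + df` over the fibres of `π` replaces `u` by a pull-back and `f` by its
fibre mean, and by the maximum principle the harmonic part is unique. Integrals of pulled-back
forms do not change under `π`, which gives the diagonal blocks.

In a mixed block the harmonic parts are `u = a ∘ π₁` and `u' = b ∘ π₂`, and the sum of `u * u'`
over `Δ₁ × Δ₂` factors as `(∑ a) * (∑ b)`. Differentials sum to zero over representatives, so `∑ a`
is `B₁ v₁` evaluated at the transfer, and it remains to see that the transfer takes values in
`range θ̲`. This holds on `Λ`, where the transfer is the index times `θ̲`, and every `s` has a
power in `Λ`. The drift is a limit of combinations of transfer values, so it lies in `range θ̲` too.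
-/

section RepSystem

variable {G : Type*} [Group G] {Λ : Subgroup G} (R : RepSystem Λ)

namespace RepSystem

theorem rep_rep_mul (x s : G) : R.rep (R.rep x * s) = R.rep (x * s) := by
  rw [← R.rep_coset (R.rep x * s) (x * (R.rep x)⁻¹) (R.rep_spec x)]
  congr 1
  group

theorem rep_mul_mul_inv {x : G} (hx : x ∈ R.Δ) (s : G) : R.rep (R.rep (x * s) * s⁻¹) = x := by
  rw [R.rep_rep_mul, mul_inv_cancel_right, R.rep_idem x hx]

theorem rep_mul_inj {x y : G} (hx : x ∈ R.Δ) (hy : y ∈ R.Δ) (s : G) :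
    R.rep (x * s) = R.rep (y * s) ↔ x = y := by
  refine ⟨fun h => ?_, fun h => by rw [h]⟩
  rw [← R.rep_mul_mul_inv hx s, h, R.rep_mul_mul_inv hy s]

theorem sum_rep {M : Type*} [AddCommMonoid M] (f : G → M) (s : G) :
    ∑ x ∈ R.Δ, f (R.rep (x * s)) = ∑ x ∈ R.Δ, f x :=
  Finset.sum_nbij' (fun x => R.rep (x * s)) (fun x => R.rep (x * s⁻¹))
    (fun _ _ => R.rep_mem _) (fun _ _ => R.rep_mem _)
    (fun _ hx => R.rep_mul_mul_inv hx s)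
    (fun _ hx => by simpa only [inv_inv] using R.rep_mul_mul_inv hx s⁻¹) (fun _ _ => rfl)

theorem sum_dd (f : G → ℝ) (s : G) : ∑ x ∈ R.Δ, dd R f x s = 0 := by
  simp only [dd, Finset.sum_sub_distrib, R.sum_rep f s, sub_self]

theorem nonempty : R.Δ.Nonempty := ⟨1, R.one_mem⟩

theorem bijective_mk_inv :
    Function.Bijective fun x : R.Δ => (QuotientGroup.mk (x : G)⁻¹ : G ⧸ Λ) := by
  constructor
  · rintro ⟨x, hx⟩ ⟨y, hy⟩ h
    have hxy : x * y⁻¹ ∈ Λ := by simpa only [inv_inv] using QuotientGroup.eq.mp h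
    have hrep := R.rep_coset y _ hxy
    rw [inv_mul_cancel_right, R.rep_idem x hx, R.rep_idem y hy] at hrep
    exact Subtype.ext hrep
  · intro q
    obtain ⟨g, rfl⟩ := QuotientGroup.mk_surjective q
    refine ⟨⟨R.rep g⁻¹, R.rep_mem _⟩, QuotientGroup.eq.mpr ?_⟩
    simpa only [_root_.mul_inv_rev, inv_inv] using Λ.inv_mem (R.rep_spec g⁻¹)

theorem card_eq_index : R.Δ.card = Λ.index := by
  rw [Subgroup.index, ← Nat.card_eq_of_bijective _ R.bijective_mk_inv, Nat.card_eq_fintype_card,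
    Fintype.card_coe]

theorem index_ne_zero (R : RepSystem Λ) : (Λ.index : ℝ) ≠ 0 := by
  rw [← R.card_eq_index]
  exact Nat.cast_ne_zero.mpr R.nonempty.card_ne_zero

theorem tsum_quotient [Λ.Normal] {M : Type*} [AddCommMonoid M] [TopologicalSpace M]
    (F : G ⧸ Λ → M) : ∑' q, F q = ∑ x ∈ R.Δ, F (x : G) := by
  have hbij : Function.Bijective fun x : R.Δ => ((x : G) : G ⧸ Λ) := by
    simpa only [Function.comp_def, Equiv.inv_apply, QuotientGroup.mk_inv, inv_inv] using
      (Equiv.inv (G ⧸ Λ)).bijective.comp R.bijective_mk_inv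
  rw [← (Equiv.ofBijective _ hbij).tsum_eq, tsum_fintype, ← Finset.sum_coe_sort R.Δ]
  rfl

theorem sum_tsum_div_index (μ : G → ℝ) (k : G → G → ℝ) :
    ∑ x ∈ R.Δ, ∑' s, μ s / (Λ.index : ℝ) * k x s = 𝔼 x ∈ R.Δ, ∑' s, μ s * k x s := by
  simp only [Finset.expect_eq_sum_div_card, R.card_eq_index, Finset.sum_div, ← tsum_div_const,
    div_mul_eq_mul_div]

end RepSystem

theorem chi_eq_expect (μ : G → ℝ) (u : G → G → ℝ) :
    chi R μ u = 𝔼 x ∈ R.Δ, ∑' s, μ s * u x s :=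
  R.sum_tsum_div_index μ u

theorem cov_eq_expect (μ : G → ℝ) (u u' : G → G → ℝ) :
    cov R μ u u' = (𝔼 x ∈ R.Δ, ∑' s, μ s * (u x s * u' x s)) - chi R μ u * chi R μ u' := by
  rw [cov, R.sum_tsum_div_index μ fun x s => u x s * u' x s]

theorem drift_eq_expect {m : ℕ} (ψ : Λ ≃* Multiplicative (Fin m → ℤ)) (μ : G → ℝ) :
    drift ψ R μ = fun i => 𝔼 x ∈ R.Δ, ∑' s, μ s * (cocycle ψ R x s i : ℝ) := by
  ext i
  rw [drift, Finset.expect_eq_sum_div_card, R.card_eq_index, inv_mul_eq_div]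

theorem expect_tsum_eq_zero {μ : G → ℝ} {k : G → G → ℝ}
    (hk : ∀ x ∈ R.Δ, Summable fun s => μ s * k x s) (h₀ : ∀ s, ∑ x ∈ R.Δ, k x s = 0) :
    𝔼 x ∈ R.Δ, ∑' s, μ s * k x s = 0 := by
  rw [Finset.expect_eq_sum_div_card, ← Summable.tsum_finsetSum hk]
  simp only [← Finset.mul_sum, h₀, mul_zero, tsum_zero, zero_div]

end RepSystem

section Covering

variable {G : Type*} [Group G] {Λ : Subgroup G} {H : Type*} [Group H] {Λ' : Subgroup H}
  {R : RepSystem Λ} {R' : RepSystem Λ'} {π : G →* H}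

/-- The homomorphism `π` induces a covering of the quotient diagram of `R` onto that of `R'`.
Surjectivity of `π` alone makes all fibres over `R'.Δ` equinumerous. -/
structure IsCovering (R : RepSystem Λ) (R' : RepSystem Λ') (π : G →* H) : Prop where
  surjective : Function.Surjective π
  map_rep : ∀ x, π (R.rep x) = R'.rep (π x)

/-- The mean of `f` over the representatives lying above `y`, used to descend a function along a
covering. It is `0` where the fibre is empty, that is, off `R'.Δ`. -/
noncomputable def fiberMean (R : RepSystem Λ) (π : G →* H) (f : G → ℝ) (y : H) : ℝ :=
  𝔼 x ∈ R.Δ with π x = y, f x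

namespace IsCovering

theorem map_mem (hπ : IsCovering R R' π) {x : G} (hx : x ∈ R.Δ) : π x ∈ R'.Δ := by
  rw [← R.rep_idem x hx, hπ.map_rep]
  exact R'.rep_mem _

theorem map_rep_mul (hπ : IsCovering R R' π) (x s : G) :
    π (R.rep (x * s)) = R'.rep (π x * π s) := by
  rw [hπ.map_rep, map_mul]

theorem exists_fiber (hπ : IsCovering R R' π) {y : H} (hy : y ∈ R'.Δ) : ∃ x ∈ R.Δ, π x = y := by
  obtain ⟨g, rfl⟩ := hπ.surjective y
  exact ⟨R.rep g, R.rep_mem g, by rw [hπ.map_rep, R'.rep_idem _ hy]⟩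

theorem sum_fiber_rep {M : Type*} [AddCommMonoid M] (hπ : IsCovering R R' π) (f : G → M) {y : H}
    (hy : y ∈ R'.Δ) (s : G) :
    ∑ x ∈ R.Δ with π x = y, f (R.rep (x * s)) =
      ∑ x ∈ R.Δ with π x = R'.rep (y * π s), f x := by
  simp only [Finset.sum_filter]
  rw [← R.sum_rep (fun x => if π x = R'.rep (y * π s) then f x else 0) s]
  refine Finset.sum_congr rfl fun x hx => ?_
  simp only [hπ.map_rep_mul, R'.rep_mul_inj (hπ.map_mem hx) hy]

theorem card_fiber_rep (hπ : IsCovering R R' π) {y : H} (hy : y ∈ R'.Δ) (s : G) :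
    (R.Δ.filter fun x => π x = y).card = (R.Δ.filter fun x => π x = R'.rep (y * π s)).card := by
  simpa only [Finset.card_eq_sum_ones] using hπ.sum_fiber_rep (fun _ => 1) hy s

theorem card_fiber (hπ : IsCovering R R' π) {y : H} (hy : y ∈ R'.Δ) :
    (R.Δ.filter fun x => π x = y).card = (R.Δ.filter fun x => π x = 1).card := by
  obtain ⟨s, hs⟩ := hπ.surjective y⁻¹
  rw [hπ.card_fiber_rep hy s, hs, mul_inv_cancel, R'.rep_idem 1 R'.one_mem]

theorem sum_comp {M : Type*} [AddCommMonoid M] (hπ : IsCovering R R' π) (F : H → M) :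
    ∑ x ∈ R.Δ, F (π x) = (R.Δ.filter fun x => π x = 1).card • ∑ y ∈ R'.Δ, F y := by
  rw [← Finset.sum_fiberwise_of_maps_to fun x hx => hπ.map_mem hx, Finset.smul_sum]
  refine Finset.sum_congr rfl fun y hy => ?_
  rw [← hπ.card_fiber hy]
  exact Finset.sum_eq_card_nsmul fun x hx => by rw [(Finset.mem_filter.mp hx).2]

theorem expect_comp (hπ : IsCovering R R' π) (F : H → ℝ) :
    𝔼 x ∈ R.Δ, F (π x) = 𝔼 y ∈ R'.Δ, F y := by
  have hcard : (R.Δ.card : ℝ) = (R.Δ.filter fun x => π x = 1).card * R'.Δ.card := by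
    simpa using hπ.sum_comp fun _ => (1 : ℝ)
  have hfiber : ((R.Δ.filter fun x => π x = 1).card : ℝ) ≠ 0 :=
    left_ne_zero_of_mul (hcard ▸ Nat.cast_ne_zero.mpr R.nonempty.card_ne_zero)
  rw [Finset.expect_eq_sum_div_card, Finset.expect_eq_sum_div_card, hπ.sum_comp, hcard,
    nsmul_eq_mul, mul_div_mul_left _ _ hfiber]

theorem fiberMean_const (hπ : IsCovering R R' π) {y : H} (hy : y ∈ R'.Δ) (c : ℝ) :
    fiberMean R π (fun _ => c) y = c := by
  obtain ⟨x, hx, hxy⟩ := hπ.exists_fiber hy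
  exact Finset.expect_const ⟨x, Finset.mem_filter.mpr ⟨hx, hxy⟩⟩ c

theorem fiberMean_dd (hπ : IsCovering R R' π) (f : G → ℝ) {y : H} (hy : y ∈ R'.Δ) (s : G) :
    fiberMean R π (fun x => dd R f x s) y = dd R' (fiberMean R π f) y (π s) := by
  simp only [fiberMean, dd, Finset.expect_sub_distrib]
  congr 1
  rw [Finset.expect_eq_sum_div_card, Finset.expect_eq_sum_div_card, hπ.sum_fiber_rep f hy,
    ← hπ.card_fiber_rep hy]

end IsCovering

end Covering

section Pushforward

variable {X Y : Type*} {μ : X → ℝ} {μ' : Y → ℝ} {π : X → Y}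

/-- `μ'` is the image of the (signed, discrete) measure `μ` under `π`; each fibre is required to
be summable, so that no `tsum` takes its junk value. -/
def IsPushforward (μ : X → ℝ) (π : X → Y) (μ' : Y → ℝ) : Prop :=
  ∀ y, HasSum (fun x : {x // π x = y} => μ x) (μ' y)

namespace IsPushforward

theorem hasSum_mul (h : IsPushforward μ π μ') {F : Y → ℝ} {a : ℝ}
    (ha : HasSum (fun x => μ x * F (π x)) a) : HasSum (fun y => μ' y * F y) a :=
  ((Equiv.sigmaFiberEquiv π).hasSum_iff.mpr ha).sigma fun y =>
    ((h y).mul_right (F y)).congr_fun fun x => by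
      simp only [Function.comp_apply, Equiv.sigmaFiberEquiv_apply, x.2]

theorem summable (h : IsPushforward μ π μ') (hμ : Summable μ) : Summable μ' := by
  obtain ⟨a, ha⟩ := hμ
  simpa only [mul_one] using
    (h.hasSum_mul (F := fun _ => 1) (by simpa only [mul_one] using ha)).summable

theorem nonneg (h : IsPushforward μ π μ') (hμ : ∀ x, 0 ≤ μ x) (y : Y) : 0 ≤ μ' y :=
  HasSum.nonneg (fun x : {x // π x = y} => hμ x) (h y)

theorem le_apply (h : IsPushforward μ π μ') (hμ : ∀ x, 0 ≤ μ x) (x : X) : μ x ≤ μ' (π x) :=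
  le_hasSum (h (π x)) ⟨x, rfl⟩ fun z _ => hμ z

end IsPushforward

theorem IsPushforward.nondeg {G H : Type*} [Group G] [Group H] {μ : G → ℝ} {μ' : H → ℝ}
    {π : G →* H} (h : IsPushforward μ π μ') (hπ : Function.Surjective π) (hμ : ∀ g, 0 ≤ μ g)
    (hnd : Nondeg μ) : Nondeg μ' := by
  intro y
  obtain ⟨x, rfl⟩ := hπ y
  induction hnd x using Subsemigroup.closure_induction with
  | mem s hs => exact Subsemigroup.subset_closure (lt_of_lt_of_le hs (h.le_apply hμ s))
  | mul a b _ _ ha hb =>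
    rw [map_mul]
    exact Subsemigroup.mul_mem _ ha hb

theorem isPushforward_fst {ν : X × Y → ℝ} (hν : Summable ν) :
    IsPushforward ν Prod.fst (marg1 ν) := by
  intro x
  have hbij : Function.Bijective fun y : Y => (⟨(x, y), rfl⟩ : {p : X × Y // p.1 = x}) :=
    ⟨fun _ _ h => congrArg (fun p => p.1.2) h, by rintro ⟨⟨_, y⟩, rfl⟩; exact ⟨y, rfl⟩⟩
  exact (Equiv.ofBijective _ hbij).hasSum_iff.mp (hν.prod_factor x).hasSum

theorem isPushforward_snd {ν : X × Y → ℝ} (hν : Summable ν) :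
    IsPushforward ν Prod.snd (marg2 ν) := by
  intro y
  have hbij : Function.Bijective fun x : X => (⟨(x, y), rfl⟩ : {p : X × Y // p.2 = y}) :=
    ⟨fun _ _ h => congrArg (fun p => p.1.1) h, by rintro ⟨⟨x, _⟩, rfl⟩; exact ⟨x, rfl⟩⟩
  exact (Equiv.ofBijective _ hbij).hasSum_iff.mp (hν.prod_symm.prod_factor y).hasSum

end Pushforward

section Harmonic

variable {G : Type*} [Group G] {Λ : Subgroup G} {R : RepSystem Λ} {μ : G → ℝ}
  {u u' : G → G → ℝ} {f f' : G → ℝ} {c c' : ℝ} {x : G}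

theorem SqInt.summable_sq (hu : SqInt R μ u) (hx : x ∈ R.Δ) :
    Summable fun s => μ s * u x s ^ 2 :=
  ((hu x hx).mul_left (Λ.index : ℝ)).congr fun s => by
    rw [← mul_assoc, mul_div_cancel₀ _ R.index_ne_zero]

theorem SqInt.summable_mul (hμ : ∀ g, 0 ≤ μ g) (hu : SqInt R μ u) (hu' : SqInt R μ u')
    (hx : x ∈ R.Δ) : Summable fun s => μ s * (u x s * u' x s) := by
  refine Summable.of_norm_bounded ((hu.summable_sq hx).add (hu'.summable_sq hx)) fun s => ?_
  rw [norm_mul, Real.norm_of_nonneg (hμ s), ← mul_add, norm_mul, Real.norm_eq_abs,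
    Real.norm_eq_abs]
  refine mul_le_mul_of_nonneg_left ?_ (hμ s)
  have hamgm := two_mul_le_add_sq |u x s| |u' x s|
  rw [sq_abs, sq_abs] at hamgm
  linarith [mul_nonneg (abs_nonneg (u x s)) (abs_nonneg (u' x s))]

theorem SqInt.summable (hμ : ∀ g, 0 ≤ μ g) (hs : Summable μ) (hu : SqInt R μ u) (hx : x ∈ R.Δ) :
    Summable fun s => μ s * u x s := by
  have hone : SqInt R μ fun _ _ => 1 := fun _ _ => by
    simpa only [one_pow, mul_one] using hs.div_const (Λ.index : ℝ)
  simpa only [mul_one] using hu.summable_mul hμ hone hx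

/-- The mean of `u` under a `μ`-distributed step is the same number `c` at every representative:
the part of harmonicity which determines the harmonic part of a 1-form. -/
def HasConstMean (R : RepSystem Λ) (μ : G → ℝ) (u : G → G → ℝ) (c : ℝ) : Prop :=
  ∀ x ∈ R.Δ, HasSum (fun s => μ s * u x s) c

theorem Harmonic.hasConstMean (hμ : ∀ g, 0 ≤ μ g) (hs : Summable μ) (hu : Harmonic R μ u) :
    HasConstMean R μ u (chi R μ u) := fun x hx => by
  rw [← hu.2 x hx]
  exact (hu.1.summable hμ hs hx).hasSum

theorem Nondeg.induction_rep (hnd : Nondeg μ) {p : G → Prop}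
    (hstep : ∀ x ∈ R.Δ, p x → ∀ s, 0 < μ s → p (R.rep (x * s))) (hx : x ∈ R.Δ) (hpx : p x)
    {y : G} (hy : y ∈ R.Δ) : p y := by
  have hreach : ∀ g, ∀ z ∈ R.Δ, p z → p (R.rep (z * g)) := by
    intro g
    induction hnd g using Subsemigroup.closure_induction with
    | mem s hs => exact fun z hz hpz => hstep z hz hpz s hs
    | mul a b _ _ ha hb =>
      intro z hz hpz
      rw [← mul_assoc, ← R.rep_rep_mul]
      exact hb _ (R.rep_mem _) (ha z hz hpz)
  simpa only [mul_inv_cancel_left, R.rep_idem y hy] using hreach (x⁻¹ * y) x hx hpx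

namespace HasConstMean

theorem eq_zero_of_dd (h : HasConstMean R μ (dd R f) c) : c = 0 := by
  have hsum := hasSum_sum h
  simp only [← Finset.mul_sum, R.sum_dd, mul_zero, Finset.sum_const] at hsum
  exact (smul_eq_zero.mp (hsum.unique hasSum_zero)).resolve_left R.nonempty.card_ne_zero

theorem apply_rep_eq_of_isMax (hμ : ∀ g, 0 ≤ μ g) (h : HasConstMean R μ (dd R f) 0)
    (hx : x ∈ R.Δ) (hmax : ∀ y ∈ R.Δ, f y ≤ f x) {s : G} (hs : 0 < μ s) :
    f (R.rep (x * s)) = f x := by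
  have hnonneg : ∀ t, 0 ≤ -(μ t * dd R f x t) := fun t => by
    rw [← mul_neg]
    exact mul_nonneg (hμ t) (neg_nonneg.mpr (sub_nonpos.mpr (hmax _ (R.rep_mem _))))
  have hsum : HasSum (fun t => -(μ t * dd R f x t)) 0 := by simpa only [neg_zero] using (h x hx).neg
  have hzero := congrFun ((hasSum_zero_iff_of_nonneg hnonneg).mp hsum) s
  exact sub_eq_zero.mp ((mul_eq_zero.mp (neg_eq_zero.mp hzero)).resolve_left hs.ne')

-- Maximum principle: the set where `f` is maximal is stable under steps charged by `μ`.
theorem dd_eq_zero (hμ : ∀ g, 0 ≤ μ g) (hnd : Nondeg μ) (h : HasConstMean R μ (dd R f) c)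
    (hx : x ∈ R.Δ) (s : G) : dd R f x s = 0 := by
  obtain rfl := h.eq_zero_of_dd
  obtain ⟨z, hz, hmax⟩ := Finset.exists_max_image R.Δ f R.nonempty
  have hconst : ∀ y ∈ R.Δ, f y = f z := fun y hy =>
    hnd.induction_rep (p := fun y => f y = f z)
      (fun y hy hyz t ht => (h.apply_rep_eq_of_isMax hμ hy (hyz ▸ hmax) ht).trans hyz) hz rfl hy
  rw [dd, hconst _ (R.rep_mem _), hconst x hx, sub_self]

theorem unique (hμ : ∀ g, 0 ≤ μ g) (hnd : Nondeg μ) (hu : HasConstMean R μ u c)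
    (hu' : HasConstMean R μ u' c')
    (h : ∀ x ∈ R.Δ, ∀ s, u x s + dd R f x s = u' x s + dd R f' x s) (hx : x ∈ R.Δ) (s : G) :
    u x s = u' x s := by
  have hdiff : ∀ x ∈ R.Δ, ∀ s, u x s - u' x s = dd R (f' - f) x s := fun x hx s => by
    have := h x hx s
    simp only [dd, Pi.sub_apply] at this ⊢
    linarith
  have hmean : HasConstMean R μ (dd R (f' - f)) (c - c') := fun x hx =>
    ((hu x hx).sub (hu' x hx)).congr_fun fun s => by rw [← mul_sub, hdiff x hx]
  rw [← sub_eq_zero, hdiff x hx, hmean.dd_eq_zero hμ hnd hx]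

end HasConstMean

theorem cov_eq_zero_of_sum_eq_zero (hμ : ∀ g, 0 ≤ μ g) (hs : Summable μ) (hu : SqInt R μ u)
    (hu' : SqInt R μ u') (hmul : ∀ s, ∑ x ∈ R.Δ, u x s * u' x s = 0)
    (hχ : (∀ s, ∑ x ∈ R.Δ, u x s = 0) ∨ ∀ s, ∑ x ∈ R.Δ, u' x s = 0) : cov R μ u u' = 0 := by
  have hχ₀ : chi R μ u * chi R μ u' = 0 := by
    rw [chi_eq_expect, chi_eq_expect, mul_eq_zero]
    exact hχ.imp (expect_tsum_eq_zero R fun _ => hu.summable hμ hs)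
      (expect_tsum_eq_zero R fun _ => hu'.summable hμ hs)
  rw [cov_eq_expect, hχ₀, sub_zero]
  exact expect_tsum_eq_zero R (k := fun x s => u x s * u' x s)
    (fun _ => hu.summable_mul hμ hu') hmul

end Harmonic

section HarmonicCovering

variable {G : Type*} [Group G] {Λ : Subgroup G} {H : Type*} [Group H] {Λ' : Subgroup H}
  {R : RepSystem Λ} {R' : RepSystem Λ'} {π : G →* H} {μ : G → ℝ} {μ' : H → ℝ}
  {u : G → G → ℝ} {f : G → ℝ} {ω w : H → H → ℝ} {g : H → ℝ} {c c' : ℝ} {x : G}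

namespace IsCovering

theorem dd_comp (hπ : IsCovering R R' π) (g : H → ℝ) (x s : G) :
    dd R (g ∘ π) x s = dd R' g (π x) (π s) := by
  rw [dd, dd, Function.comp_apply, Function.comp_apply, hπ.map_rep_mul]

theorem hasConstMean_fiberMean (hπ : IsCovering R R' π) (hu : HasConstMean R μ u c) :
    HasConstMean R μ (fun x s => fiberMean R π (fun z => u z s) (π x)) c := fun x hx => by
  have hsum := (hasSum_sum fun z (hz : z ∈ R.Δ.filter fun z => π z = π x) =>
    hu z (Finset.mem_filter.mp hz).1).div_const ((R.Δ.filter fun z => π z = π x).card : ℝ)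
  have hconst : 𝔼 z ∈ R.Δ with π z = π x, c = c := hπ.fiberMean_const (hπ.map_mem hx) c
  rw [← Finset.expect_eq_sum_div_card, hconst] at hsum
  refine hsum.congr_fun fun s => ?_
  simp only [fiberMean, Finset.expect_eq_sum_div_card, ← Finset.mul_sum, mul_div_assoc]

theorem hasConstMean_of_comp (hπ : IsCovering R R' π) (h : IsPushforward μ π μ')
    (hw : HasConstMean R μ (fun x s => w (π x) (π s)) c) : HasConstMean R' μ' w c := fun y hy => by
  obtain ⟨x, hx, rfl⟩ := hπ.exists_fiber hy
  exact h.hasSum_mul (hw x hx)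

theorem fiberMean_eq_sub_dd (hπ : IsCovering R R' π)
    (hω : ∀ x ∈ R.Δ, ∀ s, ω (π x) (π s) = u x s + dd R f x s) {y : H} (hy : y ∈ R'.Δ) (s : G) :
    fiberMean R π (fun x => u x s) y = ω y (π s) - dd R' (fiberMean R π f) y (π s) := by
  rw [← hπ.fiberMean_dd f hy, eq_sub_iff_add_eq, ← hπ.fiberMean_const hy (ω y (π s)), fiberMean,
    fiberMean, fiberMean, ← Finset.expect_add_distrib]
  refine Finset.expect_congr rfl fun x hx => ?_
  obtain ⟨hxΔ, rfl⟩ := Finset.mem_filter.mp hx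
  exact (hω x hxΔ s).symm

theorem harmonicPart_eq_sub_dd (hπ : IsCovering R R' π) (hμ : ∀ g, 0 ≤ μ g) (hnd : Nondeg μ)
    (hu : HasConstMean R μ u c) (hω : ∀ x ∈ R.Δ, ∀ s, ω (π x) (π s) = u x s + dd R f x s)
    (hx : x ∈ R.Δ) (s : G) :
    u x s = ω (π x) (π s) - dd R' (fiberMean R π f) (π x) (π s) := by
  rw [← hπ.fiberMean_eq_sub_dd hω (hπ.map_mem hx)]
  refine hu.unique (f := f) (f' := fiberMean R π f ∘ π) hμ hnd (hπ.hasConstMean_fiberMean hu)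
    (fun z hz t => ?_) hx s
  rw [hπ.fiberMean_eq_sub_dd hω (hπ.map_mem hz), hπ.dd_comp, sub_add_cancel, hω z hz]

theorem harmonicPart_comp (hπ : IsCovering R R' π) (h : IsPushforward μ π μ')
    (hμ : ∀ g, 0 ≤ μ g) (hnd : Nondeg μ) (hu : HasConstMean R μ u c)
    (hω : ∀ x ∈ R.Δ, ∀ s, ω (π x) (π s) = u x s + dd R f x s) (hw : HasConstMean R' μ' w c')
    (hω' : ∀ y ∈ R'.Δ, ∀ t, ω y t = w y t + dd R' g y t) (hx : x ∈ R.Δ) (s : G) :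
    u x s = w (π x) (π s) := by
  have hpart : ∀ x ∈ R.Δ, ∀ s, u x s = ω (π x) (π s) - dd R' (fiberMean R π f) (π x) (π s) :=
    fun x hx s => hπ.harmonicPart_eq_sub_dd hμ hnd hu hω hx s
  have hdescent : HasConstMean R' μ' (fun y t => ω y t - dd R' (fiberMean R π f) y t) c :=
    hπ.hasConstMean_of_comp h fun x hx => (hu x hx).congr_fun fun s => by rw [hpart x hx]
  rw [hpart x hx]
  refine hdescent.unique (f := fiberMean R π f) (f' := g) (h.nonneg hμ)
    (h.nondeg hπ.surjective hμ hnd) hw (fun y hy t => ?_) (hπ.map_mem hx) (π s)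
  rw [sub_add_cancel, hω' y hy]

theorem expect_tsum_comp (hπ : IsCovering R R' π) (h : IsPushforward μ π μ') {K : G → G → ℝ}
    {k : H → H → ℝ} (hK : ∀ x ∈ R.Δ, Summable fun s => μ s * K x s)
    (hKk : ∀ x ∈ R.Δ, ∀ s, K x s = k (π x) (π s)) :
    𝔼 x ∈ R.Δ, ∑' s, μ s * K x s = 𝔼 y ∈ R'.Δ, ∑' t, μ' t * k y t := by
  rw [← hπ.expect_comp]
  refine Finset.expect_congr rfl fun x hx => (h.hasSum_mul (F := k (π x)) ?_).tsum_eq.symm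
  exact (hK x hx).hasSum.congr_fun fun s => by rw [hKk x hx]

theorem cov_eq (hπ : IsCovering R R' π) (h : IsPushforward μ π μ') (hμ : ∀ g, 0 ≤ μ g)
    {u' : G → G → ℝ} {w' : H → H → ℝ} (hs : Summable μ) (hu : SqInt R μ u) (hu' : SqInt R μ u')
    (huw : ∀ x ∈ R.Δ, ∀ s, u x s = w (π x) (π s))
    (huw' : ∀ x ∈ R.Δ, ∀ s, u' x s = w' (π x) (π s)) : cov R μ u u' = cov R' μ' w w' := by
  simp only [cov_eq_expect, chi_eq_expect]
  rw [hπ.expect_tsum_comp h (fun _ => hu.summable hμ hs) huw,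
    hπ.expect_tsum_comp h (fun _ => hu'.summable hμ hs) huw',
    hπ.expect_tsum_comp h (K := fun x s => u x s * u' x s) (k := fun y t => w y t * w' y t)
      (fun _ => hu.summable_mul hμ hu') fun x hx s => by rw [huw x hx, huw' x hx]]

theorem cov_harmonicPart_eq (hπ : IsCovering R R' π) (h : IsPushforward μ π μ')
    (hμ : ∀ g, 0 ≤ μ g) (hs : Summable μ) (hnd : Nondeg μ) {u' : G → G → ℝ} {f' : G → ℝ}
    {ω' w' : H → H → ℝ} {g' : H → ℝ} (hu : IsHarmDecomp R μ (fun x s => ω (π x) (π s)) u f)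
    (hu' : IsHarmDecomp R μ (fun x s => ω' (π x) (π s)) u' f') (hw : IsHarmDecomp R' μ' ω w g)
    (hw' : IsHarmDecomp R' μ' ω' w' g') : cov R μ u u' = cov R' μ' w w' := by
  have hs' : Summable μ' := h.summable hs
  exact hπ.cov_eq h hμ hs hu.2.1.1 hu'.2.1.1
    (fun _ hx s => hπ.harmonicPart_comp h hμ hnd (hu.2.1.hasConstMean hμ hs) hu.2.2
      (hw.2.1.hasConstMean (h.nonneg hμ) hs') hw.2.2 hx s)
    (fun _ hx s => hπ.harmonicPart_comp h hμ hnd (hu'.2.1.hasConstMean hμ hs) hu'.2.2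
      (hw'.2.1.hasConstMean (h.nonneg hμ) hs') hw'.2.2 hx s)

end IsCovering

end HarmonicCovering

section Transfer

variable {H : Type*} [Group H] {Λ : Subgroup H} {m : ℕ}
  (ψ : Λ ≃* Multiplicative (Fin m → ℤ)) (R : RepSystem Λ)

theorem cocycle_mul (x s t : H) :
    cocycle ψ R x (s * t) = cocycle ψ R x s + cocycle ψ R (R.rep (x * s)) t := by
  rw [cocycle, cocycle, cocycle, ← toAdd_mul, ← map_mul]
  congr 2
  refine Subtype.ext ?_
  simp only [Subgroup.coe_mul, R.rep_rep_mul, ← mul_assoc]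
  group

theorem cocycle_of_mem [hN : Λ.Normal] {x : H} (hx : x ∈ R.Δ) (l : Λ) :
    cocycle ψ R x l = Multiplicative.toAdd (ψ ⟨x * l * x⁻¹, hN.conj_mem l l.2 x⟩) := by
  have hrep : R.rep (x * l) = x := by
    simpa only [inv_mul_cancel_right, R.rep_idem x hx] using
      R.rep_coset x _ (hN.conj_mem l l.2 x)
  rw [cocycle]
  congr 2
  exact Subtype.ext (by simp only [hrep])

theorem cocycle_one {x : H} (hx : x ∈ R.Δ) : cocycle ψ R x 1 = 0 := by
  have hx₁ := cocycle_mul ψ R x 1 1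
  rwa [mul_one, mul_one, R.rep_idem x hx, left_eq_add] at hx₁

theorem transfer_mul (s t : H) : transfer ψ R (s * t) = transfer ψ R s + transfer ψ R t := by
  simp only [transfer, cocycle_mul, Finset.sum_add_distrib]
  rw [R.sum_rep (fun x => cocycle ψ R x t) s]

theorem transfer_pow (s : H) (n : ℕ) : transfer ψ R (s ^ n) = n • transfer ψ R s := by
  induction n with
  | zero =>
    rw [pow_zero, zero_smul]
    exact Finset.sum_eq_zero fun x hx => cocycle_one ψ R hx
  | succ n ih => rw [pow_succ, transfer_mul, ih, succ_nsmul]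

theorem sum_cocycle_cast (s : H) :
    ∑ x ∈ R.Δ, (fun i => (cocycle ψ R x s i : ℝ)) = fun i => (transfer ψ R s i : ℝ) := by
  ext i
  simp only [transfer, Finset.sum_apply, Int.cast_sum]

variable {ψ R}

theorem transfer_mem_of_forall_subgroup {V : Submodule ℝ (Fin m → ℝ)}
    (hV : ∀ l : Λ, (fun i => (transfer ψ R l i : ℝ)) ∈ V) (s : H) :
    (fun i => (transfer ψ R s i : ℝ)) ∈ V := by
  obtain ⟨n, hn, -, hmem⟩ :=
    Subgroup.exists_pow_mem_of_index_ne_zero (Nat.cast_ne_zero.mp R.index_ne_zero) s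
  have htransfer : (fun i => (transfer ψ R (s ^ n) i : ℝ)) =
      (n : ℝ) • fun i => (transfer ψ R s i : ℝ) := by
    ext i
    simp only [transfer_pow, Pi.smul_apply, nsmul_eq_mul, smul_eq_mul, Int.cast_mul,
      Int.cast_natCast]
  exact (V.smul_mem_iff (Nat.cast_ne_zero.mpr hn.ne')).mp (htransfer ▸ hV ⟨s ^ n, hmem⟩)

theorem transfer_mem_range_average [hN : Λ.Normal] {Ad : H ⧸ Λ → (Fin m → ℝ) →ₗ[ℝ] (Fin m → ℝ)}
    (hAd : ∀ (x : H) (lam : Λ),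
      Ad (QuotientGroup.mk x) (fun i => (Multiplicative.toAdd (ψ lam) i : ℝ)) =
        fun i => (Multiplicative.toAdd
          (ψ ⟨x * (lam : H) * x⁻¹, hN.conj_mem (lam : H) lam.2 x⟩) i : ℝ))
    {T : (Fin m → ℝ) →ₗ[ℝ] (Fin m → ℝ)}
    (hT : ∀ v, T v = (Λ.index : ℝ)⁻¹ • ∑' f : H ⧸ Λ, Ad f v) (s : H) :
    (fun i => (transfer ψ R s i : ℝ)) ∈ LinearMap.range T := by
  refine transfer_mem_of_forall_subgroup (fun l => ?_) s
  have haverage : (Λ.index : ℝ) • T (fun i => (Multiplicative.toAdd (ψ l) i : ℝ)) =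
      fun i => (transfer ψ R l i : ℝ) := by
    rw [hT, smul_inv_smul₀ R.index_ne_zero, R.tsum_quotient fun q => Ad q _, ← sum_cocycle_cast]
    exact Finset.sum_congr rfl fun x hx => by rw [hAd, cocycle_of_mem ψ R hx l]
  exact haverage ▸ (LinearMap.range T).smul_mem _ (LinearMap.mem_range_self T _)

theorem sum_vhatB_sub_dd {B : (Fin m → ℝ) →ₗ[ℝ] (Fin m → ℝ) →ₗ[ℝ] ℝ} {v : Fin m → ℝ}
    (hv : ∀ s, B v (fun i => (transfer ψ R s i : ℝ)) = 0) (g : H → ℝ) (s : H) :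
    ∑ x ∈ R.Δ, (vhatB ψ R B v x s - dd R g x s) = 0 := by
  simp only [Finset.sum_sub_distrib, R.sum_dd, vhatB, ← map_sum, sum_cocycle_cast, hv, sub_zero]

end Transfer

section Moment

variable {G : Type*} [Group G] {μ : G → ℝ}

/-- Finite first moment with respect to the word metric of a finite symmetric generating set: what
makes the drift converge. -/
def FinFirstMoment (μ : G → ℝ) : Prop :=
  ∃ S₀ : Finset G, (∀ s ∈ S₀, s⁻¹ ∈ S₀) ∧ Subgroup.closure (S₀ : Set G) = ⊤ ∧
    Summable fun g => (wordLength S₀ g : ℝ) * μ g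

theorem FinSecondMoment.finFirstMoment (hμ : ∀ g, 0 ≤ μ g) (h : FinSecondMoment μ) :
    FinFirstMoment μ := by
  obtain ⟨S₀, hsymm, hgen, hs⟩ := h
  refine ⟨S₀, hsymm, hgen, hs.of_nonneg_of_le (fun g => mul_nonneg (Nat.cast_nonneg _) (hμ g))
    fun g => mul_le_mul_of_nonneg_right ?_ (hμ g)⟩
  exact_mod_cast Nat.le_self_pow two_ne_zero _

theorem exists_list_length_eq_wordLength {S₀ : Finset G} (hsymm : ∀ s ∈ S₀, s⁻¹ ∈ S₀)
    (hgen : Subgroup.closure (S₀ : Set G) = ⊤) (g : G) :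
    ∃ l : List G, (∀ s ∈ l, s ∈ S₀) ∧ l.length = wordLength S₀ g ∧ l.prod = g := by
  have hg : g ∈ Submonoid.closure ((S₀ : Set G) ∪ (S₀ : Set G)⁻¹) := by
    rw [← Subgroup.closure_toSubmonoid, hgen]
    exact Subgroup.mem_top g
  obtain ⟨l, hl, hprod⟩ := Submonoid.exists_list_of_mem_closure hg
  have hlS : ∀ s ∈ l, s ∈ S₀ := fun s hs =>
    (hl s hs).elim id fun h => by simpa only [inv_inv] using hsymm _ h
  exact Nat.sInf_mem
    (s := {n | ∃ l : List G, (∀ s ∈ l, s ∈ S₀) ∧ l.length = n ∧ l.prod = g})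
    ⟨l.length, l, hlS, rfl, hprod⟩

variable {H : Type*} [Group H] {Λ : Subgroup H} {m : ℕ}
  (ψ : Λ ≃* Multiplicative (Fin m → ℤ)) (R : RepSystem Λ) (π : G →* H) (i : Fin m)

theorem abs_cocycle_list_prod_le {S₀ : Finset G} {C : ℝ}
    (hC : ∀ y ∈ R.Δ, ∀ s ∈ S₀, |(cocycle ψ R y (π s) i : ℝ)| ≤ C) {l : List G}
    (hl : ∀ s ∈ l, s ∈ S₀) {x : H} (hx : x ∈ R.Δ) :
    |(cocycle ψ R x (π l.prod) i : ℝ)| ≤ l.length * C := by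
  induction l generalizing x with
  | nil => simp [cocycle_one ψ R hx]
  | cons a l ih =>
    obtain ⟨ha, hl⟩ := List.forall_mem_cons.mp hl
    calc |(cocycle ψ R x (π (a :: l).prod) i : ℝ)|
        = |(cocycle ψ R x (π a) i + cocycle ψ R (R.rep (x * π a)) (π l.prod) i : ℝ)| := by
          rw [List.prod_cons, map_mul, cocycle_mul, Pi.add_apply, Int.cast_add]
      _ ≤ C + l.length * C :=
          (abs_add_le _ _).trans (add_le_add (hC x hx a ha) (ih hl (R.rep_mem _)))
      _ = (a :: l).length * C := by
          rw [List.length_cons, Nat.cast_succ, add_one_mul, add_comm]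

theorem summable_mul_cocycle (hμ : ∀ g, 0 ≤ μ g) (hmom : FinFirstMoment μ) {x : H}
    (hx : x ∈ R.Δ) : Summable fun s => μ s * (cocycle ψ R x (π s) i : ℝ) := by
  obtain ⟨S₀, hsymm, hgen, hs⟩ := hmom
  have hfinite := ((R.Δ ×ˢ S₀).finite_toSet.image fun p => |(cocycle ψ R p.1 (π p.2) i : ℝ)|)
  obtain ⟨C, hC⟩ := hfinite.bddAbove
  have hbound : ∀ y ∈ R.Δ, ∀ s ∈ S₀, |(cocycle ψ R y (π s) i : ℝ)| ≤ C := fun y hy s hs =>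
    hC ⟨(y, s), Finset.mk_mem_product hy hs, rfl⟩
  refine Summable.of_norm_bounded (hs.mul_right C) fun s => ?_
  obtain ⟨l, hl, hlength, hprod⟩ := exists_list_length_eq_wordLength hsymm hgen s
  calc ‖μ s * (cocycle ψ R x (π s) i : ℝ)‖ = μ s * |(cocycle ψ R x (π s) i : ℝ)| := by
        rw [norm_mul, Real.norm_of_nonneg (hμ s), Real.norm_eq_abs]
    _ ≤ μ s * (wordLength S₀ s * C) := by
        refine mul_le_mul_of_nonneg_left ?_ (hμ s)
        rw [← hprod, ← hlength.trans (congrArg _ hprod.symm)]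
        exact abs_cocycle_list_prod_le ψ R π i hbound hl hx
    _ = wordLength S₀ s * μ s * C := by ring

end Moment

section Drift

variable {H : Type*} [Group H] {Λ : Subgroup H} {m : ℕ} {ψ : Λ ≃* Multiplicative (Fin m → ℤ)}
  {R : RepSystem Λ}

theorem drift_mem_of_transfer_mem {μ : H → ℝ} {V : Submodule ℝ (Fin m → ℝ)}
    (hs : ∀ i, ∀ x ∈ R.Δ, Summable fun s => μ s * (cocycle ψ R x s i : ℝ))
    (hV : ∀ s, (fun i => (transfer ψ R s i : ℝ)) ∈ V) : drift ψ R μ ∈ V := by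
  have hsum : HasSum (fun s => μ s • fun i => (transfer ψ R s i : ℝ))
      (fun i => ∑ x ∈ R.Δ, ∑' s, μ s * (cocycle ψ R x s i : ℝ)) := by
    refine Pi.hasSum.mpr fun i => ?_
    refine (hasSum_sum fun x hx => (hs i x hx).hasSum).congr_fun fun s => ?_
    rw [Pi.smul_apply, smul_eq_mul, transfer, Finset.sum_apply, Int.cast_sum, Finset.mul_sum]
  have hmem : (fun i => ∑ x ∈ R.Δ, ∑' s, μ s * (cocycle ψ R x s i : ℝ)) ∈ V := by
    rw [← hsum.tsum_eq]
    exact tsum_mem (s := V) V.closed_of_finiteDimensional fun s => V.smul_mem _ (hV s)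
  exact V.smul_mem (Λ.index : ℝ)⁻¹ hmem

variable {G : Type*} [Group G] {Λ₀ : Subgroup G} {R₀ : RepSystem Λ₀} {π : G →* H} {μ : G → ℝ}
  {μ' : H → ℝ}

theorem IsCovering.drift_mem (hπ : IsCovering R₀ R π) (h : IsPushforward μ π μ')
    (hμ : ∀ g, 0 ≤ μ g) (hmom : FinFirstMoment μ) {V : Submodule ℝ (Fin m → ℝ)}
    (hV : ∀ s, (fun i => (transfer ψ R s i : ℝ)) ∈ V) :
    (fun i => ∑ x ∈ R₀.Δ, ∑' s, μ s / (Λ₀.index : ℝ) * (cocycle ψ R (π x) (π s) i : ℝ)) ∈ V := by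
  have hdrift : (fun i => ∑ x ∈ R₀.Δ, ∑' s, μ s / (Λ₀.index : ℝ) *
      (cocycle ψ R (π x) (π s) i : ℝ)) = drift ψ R μ' := by
    ext i
    rw [drift_eq_expect, R₀.sum_tsum_div_index μ fun x s => (cocycle ψ R (π x) (π s) i : ℝ)]
    exact hπ.expect_tsum_comp h (k := fun y t => (cocycle ψ R y t i : ℝ))
      (fun x hx => summable_mul_cocycle ψ R π i hμ hmom (hπ.map_mem hx)) fun _ _ _ => rfl
  rw [hdrift]
  exact drift_mem_of_transfer_mem (fun i y hy => (h.hasSum_mul (F := fun t => cocycle ψ R y t i)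
    (summable_mul_cocycle ψ R π i hμ hmom hy).hasSum).summable) hV

end Drift

section Product

variable {Γ₁ : Type*} [Group Γ₁] {Γ₂ : Type*} [Group Γ₂] {Λ₁ : Subgroup Γ₁} {Λ₂ : Subgroup Γ₂}
  (R₁ : RepSystem Λ₁) (R₂ : RepSystem Λ₂)

theorem isCovering_fst : IsCovering (prodRep R₁ R₂) R₁ (MonoidHom.fst Γ₁ Γ₂) :=
  ⟨Prod.fst_surjective, fun _ => rfl⟩

theorem isCovering_snd : IsCovering (prodRep R₁ R₂) R₂ (MonoidHom.snd Γ₁ Γ₂) :=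
  ⟨Prod.snd_surjective, fun _ => rfl⟩

variable {R₁ R₂}

theorem cov_prodRep_eq_zero {ν : Γ₁ × Γ₂ → ℝ} (hν : ∀ s, 0 ≤ ν s) (hs : Summable ν)
    {u u' : Γ₁ × Γ₂ → Γ₁ × Γ₂ → ℝ} (hu : SqInt (prodRep R₁ R₂) ν u)
    (hu' : SqInt (prodRep R₁ R₂) ν u') {a : Γ₁ → Γ₁ → ℝ} {b : Γ₂ → Γ₂ → ℝ}
    (hua : ∀ x ∈ (prodRep R₁ R₂).Δ, ∀ s, u x s = a x.1 s.1)
    (hub : ∀ x ∈ (prodRep R₁ R₂).Δ, ∀ s, u' x s = b x.2 s.2)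
    (h₀ : (∀ s, ∑ x ∈ R₁.Δ, a x s = 0) ∨ ∀ s, ∑ y ∈ R₂.Δ, b y s = 0) :
    cov (prodRep R₁ R₂) ν u u' = 0 := by
  have hsum_u : ∀ s, ∑ x ∈ (prodRep R₁ R₂).Δ, u x s = _ • ∑ x ∈ R₁.Δ, a x s.1 := fun s => by
    rw [Finset.sum_congr rfl fun x hx => hua x hx s]
    exact (isCovering_fst R₁ R₂).sum_comp fun x => a x s.1
  have hsum_u' : ∀ s, ∑ x ∈ (prodRep R₁ R₂).Δ, u' x s = _ • ∑ y ∈ R₂.Δ, b y s.2 := fun s => by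
    rw [Finset.sum_congr rfl fun x hx => hub x hx s]
    exact (isCovering_snd R₁ R₂).sum_comp fun y => b y s.2
  have hsum_mul : ∀ s, ∑ x ∈ (prodRep R₁ R₂).Δ, u x s * u' x s =
      (∑ x ∈ R₁.Δ, a x s.1) * ∑ y ∈ R₂.Δ, b y s.2 := fun s => by
    rw [Finset.sum_mul_sum, ← Finset.sum_product']
    exact Finset.sum_congr rfl fun x hx => by rw [hua x hx, hub x hx]
  refine cov_eq_zero_of_sum_eq_zero hν hs hu hu' (fun s => ?_) ?_
  · rw [hsum_mul]
    exact h₀.elim (fun h => by rw [h, zero_mul]) fun h => by rw [h, mul_zero]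
  · exact h₀.imp (fun h s => by rw [hsum_u, h, smul_zero]) fun h s => by rw [hsum_u', h, smul_zero]

variable {m₁ m₂ : ℕ} {ψ₁ : Λ₁ ≃* Multiplicative (Fin m₁ → ℤ)}
  {ψ₂ : Λ₂ ≃* Multiplicative (Fin m₂ → ℤ)} {B₁ : (Fin m₁ → ℝ) →ₗ[ℝ] (Fin m₁ → ℝ) →ₗ[ℝ] ℝ}
  {B₂ : (Fin m₂ → ℝ) →ₗ[ℝ] (Fin m₂ → ℝ) →ₗ[ℝ] ℝ}

theorem vhatB2_inl (v : Fin m₁ → ℝ) :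
    vhatB2 ψ₁ R₁ B₁ ψ₂ R₂ B₂ (v, 0) = fun x s => vhatB ψ₁ R₁ B₁ v x.1 s.1 := by
  ext x s
  simp only [vhatB2, vhatB, map_zero, LinearMap.zero_apply, add_zero]

theorem vhatB2_inr (v : Fin m₂ → ℝ) :
    vhatB2 ψ₁ R₁ B₁ ψ₂ R₂ B₂ (0, v) = fun x s => vhatB ψ₂ R₂ B₂ v x.2 s.2 := by
  ext x s
  simp only [vhatB2, vhatB, map_zero, LinearMap.zero_apply, zero_add]

theorem cov_inl_inr_eq_zero {ν : Γ₁ × Γ₂ → ℝ} (hν : ∀ s, 0 ≤ ν s) (hs : Summable ν)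
    (hnd : Nondeg ν) {v₁ : Fin m₁ → ℝ} {v₂ : Fin m₂ → ℝ} {u u' : Γ₁ × Γ₂ → Γ₁ × Γ₂ → ℝ}
    {f f' : Γ₁ × Γ₂ → ℝ}
    (hv : (∀ s, B₁ v₁ (fun i => (transfer ψ₁ R₁ s i : ℝ)) = 0) ∨
      ∀ s, B₂ v₂ (fun i => (transfer ψ₂ R₂ s i : ℝ)) = 0)
    (hu : IsHarmDecomp (prodRep R₁ R₂) ν (vhatB2 ψ₁ R₁ B₁ ψ₂ R₂ B₂ (v₁, 0)) u f)
    (hu' : IsHarmDecomp (prodRep R₁ R₂) ν (vhatB2 ψ₁ R₁ B₁ ψ₂ R₂ B₂ (0, v₂)) u' f') :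
    cov (prodRep R₁ R₂) ν u u' = 0 := by
  rw [vhatB2_inl] at hu
  rw [vhatB2_inr] at hu'
  exact cov_prodRep_eq_zero hν hs hu.2.1.1 hu'.2.1.1
    (fun _ hx s => (isCovering_fst R₁ R₂).harmonicPart_eq_sub_dd hν hnd
      (hu.2.1.hasConstMean hν hs) hu.2.2 hx s)
    (fun _ hx s => (isCovering_snd R₁ R₂).harmonicPart_eq_sub_dd hν hnd
      (hu'.2.1.hasConstMean hν hs) hu'.2.2 hx s)
    (hv.imp (fun h s => sum_vhatB_sub_dd h _ s) fun h s => sum_vhatB_sub_dd h _ s)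

end Product

theorem structure_theorem_covariance_general
    {Γ₁ : Type*} [Group Γ₁] {Γ₂ : Type*} [Group Γ₂] {Λ₁ : Subgroup Γ₁} {Λ₂ : Subgroup Γ₂}
    (hN₁ : Λ₁.Normal) (hN₂ : Λ₂.Normal) {m₁ m₂ : ℕ}
    (ψ₁ : Λ₁ ≃* Multiplicative (Fin m₁ → ℤ)) (ψ₂ : Λ₂ ≃* Multiplicative (Fin m₂ → ℤ))
    (R₁ : RepSystem Λ₁) (R₂ : RepSystem Λ₂)
    (Ad₁ : Γ₁ ⧸ Λ₁ → (Fin m₁ → ℝ) →ₗ[ℝ] (Fin m₁ → ℝ))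
    (hAd₁ : ∀ (x : Γ₁) (lam : Λ₁),
        Ad₁ (QuotientGroup.mk x) (fun i => (Multiplicative.toAdd (ψ₁ lam) i : ℝ)) =
          fun i => (Multiplicative.toAdd
            (ψ₁ ⟨x * (lam : Γ₁) * x⁻¹, hN₁.conj_mem (lam : Γ₁) lam.2 x⟩) i : ℝ))
    (Ad₂ : Γ₂ ⧸ Λ₂ → (Fin m₂ → ℝ) →ₗ[ℝ] (Fin m₂ → ℝ))
    (hAd₂ : ∀ (x : Γ₂) (lam : Λ₂),
        Ad₂ (QuotientGroup.mk x) (fun i => (Multiplicative.toAdd (ψ₂ lam) i : ℝ)) =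
          fun i => (Multiplicative.toAdd
            (ψ₂ ⟨x * (lam : Γ₂) * x⁻¹, hN₂.conj_mem (lam : Γ₂) lam.2 x⟩) i : ℝ))
    (B₁ : (Fin m₁ → ℝ) →ₗ[ℝ] (Fin m₁ → ℝ) →ₗ[ℝ] ℝ)
    (B₂ : (Fin m₂ → ℝ) →ₗ[ℝ] (Fin m₂ → ℝ) →ₗ[ℝ] ℝ)
    (T₁ : (Fin m₁ → ℝ) →ₗ[ℝ] (Fin m₁ → ℝ))
    (hT₁ : ∀ v, T₁ v = (Λ₁.index : ℝ)⁻¹ • ∑' f : Γ₁ ⧸ Λ₁, Ad₁ f v)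
    (T₂ : (Fin m₂ → ℝ) →ₗ[ℝ] (Fin m₂ → ℝ))
    (hT₂ : ∀ v, T₂ v = (Λ₂.index : ℝ)⁻¹ • ∑' f : Γ₂ ⧸ Λ₂, Ad₂ f v)
    (ν : Γ₁ × Γ₂ → ℝ) (hν : IsProb ν) (hnd : Nondeg ν) (hmom : FinFirstMoment ν) :
    Nondeg (marg1 ν) ∧ Nondeg (marg2 ν) ∧
    ((fun i => ∑ x ∈ (prodRep R₁ R₂).Δ, ∑' s : Γ₁ × Γ₂,
        ν s / (((Λ₁.prod Λ₂).index : ℝ)) * (cocycle ψ₁ R₁ x.1 s.1 i : ℝ)) ∈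
      LinearMap.range T₁) ∧
    ((fun i => ∑ x ∈ (prodRep R₁ R₂).Δ, ∑' s : Γ₁ × Γ₂,
        ν s / (((Λ₁.prod Λ₂).index : ℝ)) * (cocycle ψ₂ R₂ x.2 s.2 i : ℝ)) ∈
      LinearMap.range T₂) ∧
    (∀ (v₁ v₁' : Fin m₁ → ℝ) (u u' : (Γ₁ × Γ₂) → (Γ₁ × Γ₂) → ℝ) (f f' : Γ₁ × Γ₂ → ℝ)
        (u₁ u₁' : Γ₁ → Γ₁ → ℝ) (g g' : Γ₁ → ℝ),
        IsHarmDecomp (prodRep R₁ R₂) ν (vhatB2 ψ₁ R₁ B₁ ψ₂ R₂ B₂ (v₁, 0)) u f →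
        IsHarmDecomp (prodRep R₁ R₂) ν (vhatB2 ψ₁ R₁ B₁ ψ₂ R₂ B₂ (v₁', 0)) u' f' →
        IsHarmDecomp R₁ (marg1 ν) (vhatB ψ₁ R₁ B₁ v₁) u₁ g →
        IsHarmDecomp R₁ (marg1 ν) (vhatB ψ₁ R₁ B₁ v₁') u₁' g' →
        cov (prodRep R₁ R₂) ν u u' = cov R₁ (marg1 ν) u₁ u₁') ∧
    (∀ (v₂ v₂' : Fin m₂ → ℝ) (u u' : (Γ₁ × Γ₂) → (Γ₁ × Γ₂) → ℝ) (f f' : Γ₁ × Γ₂ → ℝ)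
        (u₂ u₂' : Γ₂ → Γ₂ → ℝ) (g g' : Γ₂ → ℝ),
        IsHarmDecomp (prodRep R₁ R₂) ν (vhatB2 ψ₁ R₁ B₁ ψ₂ R₂ B₂ (0, v₂)) u f →
        IsHarmDecomp (prodRep R₁ R₂) ν (vhatB2 ψ₁ R₁ B₁ ψ₂ R₂ B₂ (0, v₂')) u' f' →
        IsHarmDecomp R₂ (marg2 ν) (vhatB ψ₂ R₂ B₂ v₂) u₂ g →
        IsHarmDecomp R₂ (marg2 ν) (vhatB ψ₂ R₂ B₂ v₂') u₂' g' →
        cov (prodRep R₁ R₂) ν u u' = cov R₂ (marg2 ν) u₂ u₂') ∧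
    (∀ (v₁ : Fin m₁ → ℝ) (v₂ : Fin m₂ → ℝ)
        (u u' : (Γ₁ × Γ₂) → (Γ₁ × Γ₂) → ℝ) (f f' : Γ₁ × Γ₂ → ℝ),
        ((∀ w ∈ LinearMap.range T₁, B₁ v₁ w = 0) ∨
          (∀ w ∈ LinearMap.range T₂, B₂ v₂ w = 0)) →
        IsHarmDecomp (prodRep R₁ R₂) ν (vhatB2 ψ₁ R₁ B₁ ψ₂ R₂ B₂ (v₁, 0)) u f →
        IsHarmDecomp (prodRep R₁ R₂) ν (vhatB2 ψ₁ R₁ B₁ ψ₂ R₂ B₂ (0, v₂)) u' f' →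
        cov (prodRep R₁ R₂) ν u u' = 0) := by
  have hs := hν.2.summable
  have hπ₁ := isCovering_fst R₁ R₂
  have hπ₂ := isCovering_snd R₁ R₂
  have h₁ : IsPushforward ν (MonoidHom.fst Γ₁ Γ₂) (marg1 ν) := isPushforward_fst hs
  have h₂ : IsPushforward ν (MonoidHom.snd Γ₁ Γ₂) (marg2 ν) := isPushforward_snd hs
  have hrange₁ := transfer_mem_range_average (R := R₁) hAd₁ hT₁
  have hrange₂ := transfer_mem_range_average (R := R₂) hAd₂ hT₂
  refine ⟨h₁.nondeg hπ₁.surjective hν.1 hnd, h₂.nondeg hπ₂.surjective hν.1 hnd,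
    hπ₁.drift_mem h₁ hν.1 hmom hrange₁, hπ₂.drift_mem h₂ hν.1 hmom hrange₂, ?_, ?_, ?_⟩
  · intro v₁ v₁' u u' f f' u₁ u₁' g g' hu hu' hu₁ hu₁'
    rw [vhatB2_inl] at hu hu'
    exact hπ₁.cov_harmonicPart_eq h₁ hν.1 hs hnd hu hu' hu₁ hu₁'
  · intro v₂ v₂' u u' f f' u₂ u₂' g g' hu hu' hu₂ hu₂'
    rw [vhatB2_inr] at hu hu'
    exact hπ₂.cov_harmonicPart_eq h₂ hν.1 hs hnd hu hu' hu₂ hu₂'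
  · intro v₁ v₂ u u' f f' hv hu hu'
    exact cov_inl_inr_eq_zero hν.1 hs hnd
      (hv.imp (fun h s => h _ (hrange₁ s)) fun h s => h _ (hrange₂ s)) hu hu'

/-- Structure theorem for the covariance of a coupled random walk on
`Γ₁ × Γ₂`: the drift lies in `range θ̲₁ × range θ̲₂`, the diagonal blocks of the
covariance form are those of the marginals, and the off-diagonal block vanishes on
`(range θ̲₁)^⊥ × ℝ^{m₂}` and `ℝ^{m₁} × (range θ̲₂)^⊥`. -/
theorem structure_theorem_covariance
    {Γ₁ : Type*} [Group Γ₁] [Countable Γ₁] {Γ₂ : Type*} [Group Γ₂] [Countable Γ₂]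
    {Λ₁ : Subgroup Γ₁} {Λ₂ : Subgroup Γ₂} (hN₁ : Λ₁.Normal) (hN₂ : Λ₂.Normal)
    (hI₁ : Λ₁.index ≠ 0) (hI₂ : Λ₂.index ≠ 0)
    {m₁ m₂ : ℕ} (hm₁ : 1 ≤ m₁) (hm₂ : 1 ≤ m₂)
    (ψ₁ : Λ₁ ≃* Multiplicative (Fin m₁ → ℤ)) (ψ₂ : Λ₂ ≃* Multiplicative (Fin m₂ → ℤ))
    (R₁ : RepSystem Λ₁) (R₂ : RepSystem Λ₂)
    (Ad₁ : Γ₁ ⧸ Λ₁ → (Fin m₁ → ℝ) →ₗ[ℝ] (Fin m₁ → ℝ))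
    (hAd₁ : ∀ (x : Γ₁) (lam : Λ₁),
        Ad₁ (QuotientGroup.mk x) (fun i => (Multiplicative.toAdd (ψ₁ lam) i : ℝ)) =
          fun i => (Multiplicative.toAdd
            (ψ₁ ⟨x * (lam : Γ₁) * x⁻¹, hN₁.conj_mem (lam : Γ₁) lam.2 x⟩) i : ℝ))
    (Ad₂ : Γ₂ ⧸ Λ₂ → (Fin m₂ → ℝ) →ₗ[ℝ] (Fin m₂ → ℝ))
    (hAd₂ : ∀ (x : Γ₂) (lam : Λ₂),
        Ad₂ (QuotientGroup.mk x) (fun i => (Multiplicative.toAdd (ψ₂ lam) i : ℝ)) =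
          fun i => (Multiplicative.toAdd
            (ψ₂ ⟨x * (lam : Γ₂) * x⁻¹, hN₂.conj_mem (lam : Γ₂) lam.2 x⟩) i : ℝ))
    (B₁ : (Fin m₁ → ℝ) →ₗ[ℝ] (Fin m₁ → ℝ) →ₗ[ℝ] ℝ)
    (hB₁symm : ∀ u w, B₁ u w = B₁ w u) (hB₁pos : ∀ u, u ≠ 0 → 0 < B₁ u u)
    (hB₁inv : ∀ (f : Γ₁ ⧸ Λ₁) (u w), B₁ (Ad₁ f u) (Ad₁ f w) = B₁ u w)
    (B₂ : (Fin m₂ → ℝ) →ₗ[ℝ] (Fin m₂ → ℝ) →ₗ[ℝ] ℝ)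
    (hB₂symm : ∀ u w, B₂ u w = B₂ w u) (hB₂pos : ∀ u, u ≠ 0 → 0 < B₂ u u)
    (hB₂inv : ∀ (f : Γ₂ ⧸ Λ₂) (u w), B₂ (Ad₂ f u) (Ad₂ f w) = B₂ u w)
    (T₁ : (Fin m₁ → ℝ) →ₗ[ℝ] (Fin m₁ → ℝ))
    (hT₁ : ∀ v, T₁ v = (Λ₁.index : ℝ)⁻¹ • ∑' f : Γ₁ ⧸ Λ₁, Ad₁ f v)
    (T₂ : (Fin m₂ → ℝ) →ₗ[ℝ] (Fin m₂ → ℝ))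
    (hT₂ : ∀ v, T₂ v = (Λ₂.index : ℝ)⁻¹ • ∑' f : Γ₂ ⧸ Λ₂, Ad₂ f v)
    (ν : Γ₁ × Γ₂ → ℝ) (hν : IsProb ν) (hnd : Nondeg ν) (hmom : FinSecondMoment ν) :
    -- the marginals are non-degenerate
    Nondeg (marg1 ν) ∧ Nondeg (marg2 ν) ∧
    -- (i) the drift lies in range θ̲₁ × range θ̲₂
    ((fun i => ∑ x ∈ (prodRep R₁ R₂).Δ, ∑' s : Γ₁ × Γ₂,
        ν s / (((Λ₁.prod Λ₂).index : ℝ)) * (cocycle ψ₁ R₁ x.1 s.1 i : ℝ)) ∈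
      LinearMap.range T₁) ∧
    ((fun i => ∑ x ∈ (prodRep R₁ R₂).Δ, ∑' s : Γ₁ × Γ₂,
        ν s / (((Λ₁.prod Λ₂).index : ℝ)) * (cocycle ψ₂ R₂ x.2 s.2 i : ℝ)) ∈
      LinearMap.range T₂) ∧
    -- (ii) first diagonal block
    (∀ (v₁ v₁' : Fin m₁ → ℝ) (u u' : (Γ₁ × Γ₂) → (Γ₁ × Γ₂) → ℝ) (f f' : Γ₁ × Γ₂ → ℝ)
        (u₁ u₁' : Γ₁ → Γ₁ → ℝ) (g g' : Γ₁ → ℝ),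
        IsHarmDecomp (prodRep R₁ R₂) ν (vhatB2 ψ₁ R₁ B₁ ψ₂ R₂ B₂ (v₁, 0)) u f →
        IsHarmDecomp (prodRep R₁ R₂) ν (vhatB2 ψ₁ R₁ B₁ ψ₂ R₂ B₂ (v₁', 0)) u' f' →
        IsHarmDecomp R₁ (marg1 ν) (vhatB ψ₁ R₁ B₁ v₁) u₁ g →
        IsHarmDecomp R₁ (marg1 ν) (vhatB ψ₁ R₁ B₁ v₁') u₁' g' →
        cov (prodRep R₁ R₂) ν u u' = cov R₁ (marg1 ν) u₁ u₁') ∧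
    -- (ii) second diagonal block
    (∀ (v₂ v₂' : Fin m₂ → ℝ) (u u' : (Γ₁ × Γ₂) → (Γ₁ × Γ₂) → ℝ) (f f' : Γ₁ × Γ₂ → ℝ)
        (u₂ u₂' : Γ₂ → Γ₂ → ℝ) (g g' : Γ₂ → ℝ),
        IsHarmDecomp (prodRep R₁ R₂) ν (vhatB2 ψ₁ R₁ B₁ ψ₂ R₂ B₂ (0, v₂)) u f →
        IsHarmDecomp (prodRep R₁ R₂) ν (vhatB2 ψ₁ R₁ B₁ ψ₂ R₂ B₂ (0, v₂')) u' f' →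
        IsHarmDecomp R₂ (marg2 ν) (vhatB ψ₂ R₂ B₂ v₂) u₂ g →
        IsHarmDecomp R₂ (marg2 ν) (vhatB ψ₂ R₂ B₂ v₂') u₂' g' →
        cov (prodRep R₁ R₂) ν u u' = cov R₂ (marg2 ν) u₂ u₂') ∧
    -- (iii) off-diagonal vanishing
    (∀ (v₁ : Fin m₁ → ℝ) (v₂ : Fin m₂ → ℝ)
        (u u' : (Γ₁ × Γ₂) → (Γ₁ × Γ₂) → ℝ) (f f' : Γ₁ × Γ₂ → ℝ),
        ((∀ w ∈ LinearMap.range T₁, B₁ v₁ w = 0) ∨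
          (∀ w ∈ LinearMap.range T₂, B₂ v₂ w = 0)) →
        IsHarmDecomp (prodRep R₁ R₂) ν (vhatB2 ψ₁ R₁ B₁ ψ₂ R₂ B₂ (v₁, 0)) u f →
        IsHarmDecomp (prodRep R₁ R₂) ν (vhatB2 ψ₁ R₁ B₁ ψ₂ R₂ B₂ (0, v₂)) u' f' →
        cov (prodRep R₁ R₂) ν u u' = 0) := by
  exact structure_theorem_covariance_general hN₁ hN₂ ψ₁ ψ₂ R₁ R₂ Ad₁ hAd₁ Ad₂ hAd₂ B₁ B₂ T₁ hT₁
    T₂ hT₂ ν hν hnd (hmom.finFirstMoment hν.1)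

end NSVA
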